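/- Let p be an odd prime, let ℓ ≥ 2 be an integer with p ∤ ℓ, and let n ≥ 2. Then there is a ring isomorphism 𝔽_p[X]/(R̄_n, Q̄_{p^{(n−1)}}) ≅ 𝔽_p[Z]/(Q̄_ℓ(Z)^{p^{n−2}}) × 𝔽_p[Z,G]/(Z^{(p^{n−2}−1)/2}, G² − 1), where R_n := Q_{p^{(n)}}/Q_{p^{(n−1)}} ∈ ℤ[X] and the bar denotes reduction of integer polynomials modulo p. (When n = 2 the second factor is the zero ring, so the isomorphism is with 𝔽_p[Z]/(Q̄_ℓ(Z)) alone.) -/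

import Mathlib

/-!
Write `F = 𝔽_p`, `q = p ^ (n - 2)` and `D = X² - 4`. After adjoining `v` with `v + v⁻¹ = X`, one has
`Q_k · (v - v⁻¹) = v^k - v^{-k}` and `(v - v⁻¹)² = D`, so the Frobenius gives
`Q̄_{ℓ p^k} = Q̄_ℓ ^ (p^k) · D ^ ((p^k - 1) / 2)` (`map_chebQ_mul_pow`).
Since `p ≥ 3`, comparing exponents shows that `Q̄_{p^{(n-1)}}` squared divides `Q̄_{p^{(n)}}`, so
`Q̄_{p^{(n-1)}}` divides `R̄_n` and the ideal is generated by
`Q̄_{p^{(n-1)}} = Q̄_ℓ ^ q · D ^ ((q - 1) / 2)` alone.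

As `Q_ℓ(±2) = ±ℓ ≠ 0` in `F`, the polynomials `Q̄_ℓ`, `X - 2`, `X + 2` are pairwise coprime, and the
Chinese remainder theorem splits the quotient as
`F[X]/(Q̄_ℓ^q) × F[X]/((X - 2)^m) × F[X]/((X + 2)^m)` with `m = (q - 1) / 2`.
On the other side, `G² - 1 = (G - 1)(G + 1)` splits `F[Z,G]/(Z^m, G² - 1)` into
`F[Z,G]/(Z^m, G ∓ 1)`, and each of these is `F[Z]/(Z^m)`, a translate of the factors above.
-/

/-- The normalized Chebyshev polynomial of the second kind:
`Q 0 = 0`, `Q 1 = 1`, `Q 2 = X`, and `Q (k+2) = X * Q (k+1) - Q k`. -/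
noncomputable def chebQ : ℕ → Polynomial ℤ
  | 0 => 0
  | 1 => 1
  | (k + 2) => Polynomial.X * chebQ (k + 1) - chebQ k

/-- `p^{(0)} = 1` and `p^{(n)} = ℓ · p^{n-1}` for `n ≥ 1`. -/
def plPow (p ℓ : ℕ) : ℕ → ℕ
  | 0 => 1
  | (n + 1) => ℓ * p ^ n

open Polynomial in
theorem chebQ_mul_sub {A : Type*} [CommRing A] (φ : ℤ[X] →+* A) (v w : A)
    (hs : v + w = φ X) (hvw : v * w = 1) (k : ℕ) :
    φ (chebQ k) * (v - w) = v ^ k - w ^ k := by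
  induction k using Nat.twoStepInduction with
  | zero => simp [chebQ]
  | one => simp [chebQ]
  | more k h0 h1 =>
    rw [chebQ, map_sub, map_mul, ← hs]
    linear_combination (v + w) * h1 - h0 + (v ^ k - w ^ k) * hvw

open Polynomial in
/-- The Frobenius identity `Q̄_{m p^k} = Q̄_m ^ (p^k) · (X² - 4) ^ ((p^k - 1) / 2)`. -/
theorem map_chebQ_mul_pow (p : ℕ) [Fact p.Prime] (hodd : Odd p) (m k : ℕ) :
    (chebQ (m * p ^ k)).map (Int.castRingHom (ZMod p)) =
      (chebQ m).map (Int.castRingHom (ZMod p)) ^ (p ^ k) * (X ^ 2 - 4) ^ ((p ^ k - 1) / 2) := by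
  -- `f` is the minimal equation `v² - X v + 1 = 0` of `v` over `F[X]`.
  let f : (ZMod p)[X][X] := X ^ 2 - C X * X + 1
  have hf : f.degree = 2 := by
    simp only [f]
    compute_degree!
  have hinj : Function.Injective (AdjoinRoot.of f) :=
    AdjoinRoot.of.injective_of_degree_ne_zero (by rw [hf]; norm_num)
  have : CharP (AdjoinRoot f) p := charP_of_injective_ringHom hinj p
  let φ : ℤ[X] →+* AdjoinRoot f := (AdjoinRoot.of f).comp (mapRingHom (Int.castRingHom (ZMod p)))
  have hφ : ∀ P : ℤ[X], φ P = AdjoinRoot.of f (P.map (Int.castRingHom (ZMod p))) := fun _ => rfl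
  obtain ⟨v, hv⟩ : ∃ v : AdjoinRoot f, v ^ 2 - AdjoinRoot.of f X * v + 1 = 0 := by
    refine ⟨AdjoinRoot.root f, ?_⟩
    have := AdjoinRoot.eval₂_root f
    simpa [f] using this
  obtain ⟨w, hw⟩ : ∃ w, w = AdjoinRoot.of f X - v := ⟨_, rfl⟩
  have hs : v + w = φ X := by rw [hφ, hw]; simp
  have hvw : v * w = 1 := by rw [hw]; linear_combination -hv
  have hD : (v - w) ^ 2 = AdjoinRoot.of f (X ^ 2 - 4) := by
    simp only [map_sub, map_pow, map_ofNat]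
    rw [hw]; linear_combination 4 * hv
  have h1 := chebQ_mul_sub φ v w hs hvw (m * p ^ k)
  have h2 := chebQ_mul_sub φ v w hs hvw m
  rw [pow_mul, pow_mul, ← sub_pow_char_pow, ← h2, mul_pow] at h1
  obtain ⟨t, ht⟩ := hodd.pow (n := k)
  have e : (p ^ k - 1) / 2 = t := by omega
  have h3 : (v - w) ^ p ^ k * (v - w) = (v - w) ^ 2 * ((v - w) ^ 2) ^ t := by
    rw [ht, ← pow_mul, ← pow_succ, ← pow_add]; congr 1; omega
  rw [e]
  have hD0 : (X ^ 2 - 4 : (ZMod p)[X]) ≠ 0 :=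
    (by monicity! : (X ^ 2 - 4 : (ZMod p)[X]).Monic).ne_zero
  apply mul_left_cancel₀ hD0
  apply hinj
  rw [map_mul, map_mul, map_mul, map_pow, map_pow, ← hD, ← hφ, ← hφ]
  linear_combination (v - w) * h1 + φ (chebQ m) ^ p ^ k * h3

open Polynomial in
theorem eval_two_chebQ (k : ℕ) : (chebQ k).eval 2 = k := by
  induction k using Nat.twoStepInduction with
  | zero => simp [chebQ]
  | one => simp [chebQ]
  | more k h0 h1 => simp [chebQ, h0, h1]; ring

open Polynomial in
theorem eval_neg_two_chebQ (k : ℕ) : (chebQ k).eval (-2) = (-1) ^ (k + 1) * k := by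
  induction k using Nat.twoStepInduction with
  | zero => simp [chebQ]
  | one => simp [chebQ]
  | more k h0 h1 => simp [chebQ, h0, h1]; ring

/-- Eliminating `G = e` and translating `Z = X - c` identifies `F[Z,G]/(Z^m, G - e)` with
`F[X]/((X - c)^m)`. -/
theorem nonempty_quotient_equiv {F : Type*} [Field F] (m : ℕ) (c e : F) :
    Nonempty ((Polynomial F ⧸ Ideal.span {(Polynomial.X - Polynomial.C c) ^ m}) ≃+*
      (MvPolynomial (Fin 2) F ⧸ Ideal.span
        {(MvPolynomial.X 0 : MvPolynomial (Fin 2) F) ^ m,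
          MvPolynomial.X 1 - MvPolynomial.C e})) := by
  set I := Ideal.span {(Polynomial.X - Polynomial.C c) ^ m} with hI
  set J := Ideal.span {(MvPolynomial.X 0 : MvPolynomial (Fin 2) F) ^ m,
          MvPolynomial.X 1 - MvPolynomial.C e} with hJ
  have hJ0 : Ideal.Quotient.mkₐ F J (MvPolynomial.X 0) ^ m = 0 := by
    rw [← map_pow]
    exact Ideal.Quotient.eq_zero_iff_mem.2 (Ideal.subset_span (by simp))
  have hJ1 : Ideal.Quotient.mkₐ F J (MvPolynomial.X 1) = algebraMap F _ e := by
    refine Ideal.Quotient.eq.2 (Ideal.subset_span (by simp [MvPolynomial.algebraMap_eq]))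
  have hI0 : (Ideal.Quotient.mkₐ F I Polynomial.X - algebraMap F _ c) ^ m = 0 := by
    have : Ideal.Quotient.mkₐ F I ((Polynomial.X - Polynomial.C c) ^ m) = 0 :=
      Ideal.Quotient.eq_zero_iff_mem.2 (Ideal.subset_span (by simp))
    rwa [map_pow, map_sub] at this
  let a : (Polynomial F ⧸ I) →ₐ[F] (MvPolynomial (Fin 2) F ⧸ J) :=
    Ideal.Quotient.liftₐ I
      (Polynomial.aeval (Ideal.Quotient.mkₐ F J (MvPolynomial.X 0) + algebraMap F _ c)) (by
        intro x hx
        rw [hI, Ideal.mem_span_singleton] at hx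
        obtain ⟨y, rfl⟩ := hx
        rw [map_mul]
        simp only [map_pow, map_sub, Polynomial.aeval_X, Polynomial.aeval_C, add_sub_cancel_right]
        rw [hJ0, zero_mul])
  let b : (MvPolynomial (Fin 2) F ⧸ J) →ₐ[F] (Polynomial F ⧸ I) :=
    Ideal.Quotient.liftₐ J
      (MvPolynomial.aeval ![Ideal.Quotient.mkₐ F I Polynomial.X - algebraMap F _ c,
        algebraMap F _ e]) (by
        intro x hx
        rw [← RingHom.mem_ker]
        revert x
        change J ≤ RingHom.ker _
        rw [hJ, Ideal.span_le]
        rintro x (rfl | rfl)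
        · simp only [SetLike.mem_coe, RingHom.mem_ker, map_pow, MvPolynomial.aeval_X,
            Matrix.cons_val_zero]
          exact hI0
        · simp [RingHom.mem_ker])
  have ha : a (Ideal.Quotient.mkₐ F I Polynomial.X) =
      Ideal.Quotient.mkₐ F J (MvPolynomial.X 0) + algebraMap F _ c :=
    Polynomial.aeval_X _
  have hb0 : b (Ideal.Quotient.mkₐ F J (MvPolynomial.X 0)) =
      Ideal.Quotient.mkₐ F I Polynomial.X - algebraMap F _ c :=
    MvPolynomial.aeval_X _ _
  refine ⟨(AlgEquiv.ofAlgHom a b ?_ ?_).toRingEquiv⟩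
  · apply Ideal.Quotient.algHom_ext
    apply MvPolynomial.algHom_ext
    intro i
    simp only [AlgHom.comp_apply, AlgHom.id_apply]
    fin_cases i
    · change a (b (Ideal.Quotient.mkₐ F J (MvPolynomial.X 0))) = _
      rw [hb0, map_sub, ha, AlgHom.commutes, add_sub_cancel_right]
      rfl
    · change a (b (Ideal.Quotient.mkₐ F J (MvPolynomial.X 1))) =
        Ideal.Quotient.mkₐ F J (MvPolynomial.X 1)
      rw [hJ1, AlgHom.commutes, AlgHom.commutes]
  · apply Ideal.Quotient.algHom_ext
    apply Polynomial.algHom_ext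
    simp only [AlgHom.comp_apply, AlgHom.id_apply]
    rw [ha, map_add, hb0, AlgHom.commutes, sub_add_cancel]

/-- The Chinese remainder theorem with the intersection presented as a given ideal `K = I * J`. -/
theorem nonempty_crt {A : Type*} [CommRing A] {I J K : Ideal A} (h : IsCoprime I J)
    (hK : K = I * J) : Nonempty ((A ⧸ K) ≃+* (A ⧸ I) × (A ⧸ J)) :=
  ⟨(Ideal.quotEquivOfEq (hK.trans (Ideal.mul_eq_inf_of_isCoprime h))).trans
    (Ideal.quotientInfEquivQuotientProd I J h)⟩

/-- The CRT splitting of `F[Z,G]/(Z^m, G² - 1)` along `G = ±1`; it needs `2` invertible. -/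
theorem nonempty_crt_mv {F : Type*} [Field F] (h2 : (2 : F) ≠ 0) (m : ℕ) :
    Nonempty ((MvPolynomial (Fin 2) F ⧸ Ideal.span
        {(MvPolynomial.X 0 : MvPolynomial (Fin 2) F) ^ m, MvPolynomial.X 1 ^ 2 - 1}) ≃+*
      (MvPolynomial (Fin 2) F ⧸ Ideal.span
        {(MvPolynomial.X 0 : MvPolynomial (Fin 2) F) ^ m,
          MvPolynomial.X 1 - MvPolynomial.C 1}) ×
      (MvPolynomial (Fin 2) F ⧸ Ideal.span
        {(MvPolynomial.X 0 : MvPolynomial (Fin 2) F) ^ m,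
          MvPolynomial.X 1 - MvPolynomial.C (-1)})) := by
  have hC : (MvPolynomial.C (2⁻¹ : F) : MvPolynomial (Fin 2) F) * 2 = 1 := by
    rw [← map_ofNat (MvPolynomial.C : F →+* MvPolynomial (Fin 2) F) 2, ← map_mul,
      inv_mul_cancel₀ h2, map_one]
  rw [map_neg, map_one, sub_neg_eq_add]
  generalize (MvPolynomial.C (2⁻¹ : F) : MvPolynomial (Fin 2) F) = u at hC
  generalize (MvPolynomial.X 0 : MvPolynomial (Fin 2) F) ^ m = z
  generalize (MvPolynomial.X 1 : MvPolynomial (Fin 2) F) = g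
  apply nonempty_crt
  · refine Ideal.isCoprime_iff_exists.2 ⟨-u * (g - 1), ?_, u * (g + 1), ?_, ?_⟩
    · exact Ideal.mul_mem_left _ _ (Ideal.subset_span (by simp))
    · exact Ideal.mul_mem_left _ _ (Ideal.subset_span (by simp))
    · linear_combination hC
  · rw [Ideal.span_pair_mul_span_pair]
    apply le_antisymm
    · rw [Ideal.span_le]
      rintro x (rfl | rfl)
      · -- `z = z (g + 1) / 2 - (g - 1) z / 2`
        have h : x = u * (x * (g + 1)) - u * ((g - 1) * x) := by linear_combination -x * hC
        refine (congrArg (· ∈ _) h).mpr ?_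
        exact sub_mem (Ideal.mul_mem_left _ _ (Ideal.subset_span (by simp)))
          (Ideal.mul_mem_left _ _ (Ideal.subset_span (by simp)))
      · exact Ideal.subset_span (by simp; grind)
    · rw [Ideal.span_le]
      have hz : z ∈ Ideal.span {z, g ^ 2 - 1} := Ideal.subset_span (by simp)
      rintro x (rfl | rfl | rfl | rfl)
      · exact Ideal.mul_mem_left _ _ hz
      · exact Ideal.mul_mem_right _ _ hz
      · exact Ideal.mul_mem_left _ _ hz
      · exact Ideal.subset_span (by simp; grind)

/-- `F[X]/((X² - 4)^m) ≅ F[Z,G]/(Z^m, G² - 1)`: both sides split into the pieces at `X = ±2`,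
respectively `G = ±1`. -/
theorem nonempty_second_factor {F : Type*} [Field F] (h2 : (2 : F) ≠ 0) (m : ℕ) :
    Nonempty ((Polynomial F ⧸ Ideal.span {((Polynomial.X ^ 2 - 4) ^ m : Polynomial F)}) ≃+*
      (MvPolynomial (Fin 2) F ⧸ Ideal.span
        {(MvPolynomial.X 0 : MvPolynomial (Fin 2) F) ^ m, MvPolynomial.X 1 ^ 2 - 1})) := by
  obtain ⟨e0⟩ := nonempty_crt_mv h2 m
  obtain ⟨e1⟩ := nonempty_quotient_equiv m (2 : F) 1
  obtain ⟨e2⟩ := nonempty_quotient_equiv m (-2 : F) (-1)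
  have hco : IsCoprime (Polynomial.X - Polynomial.C (2 : F))
      (Polynomial.X - Polynomial.C (-2 : F)) := by
    apply Polynomial.isCoprime_X_sub_C_of_isUnit_sub
    rw [isUnit_iff_ne_zero, show (2 : F) - -2 = 2 * 2 by ring]
    exact mul_ne_zero h2 h2
  obtain ⟨e3⟩ := nonempty_crt (K := Ideal.span {((Polynomial.X ^ 2 - 4) ^ m : Polynomial F)})
    ((Ideal.isCoprime_span_singleton_iff _ _).2 (hco.pow (m := m) (n := m))) (by
      rw [Ideal.span_singleton_mul_span_singleton, ← mul_pow]
      congr 3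
      simp only [map_neg, map_ofNat]
      ring)
  exact ⟨e3.trans ((e1.prodCongr e2).trans e0.symm)⟩

/-- The Grothendieck ring of the stable category of `Ver_{p^{(n)}}^{ζ}` for odd `p`:
`𝔽_p[X]/(R̄_n, Q̄_{p^{(n-1)}}) ≅ 𝔽_p[Z]/(Q̄_ℓ(Z)^{p^{n-2}}) × 𝔽_p[Z,G]/(Z^{(p^{n-2}-1)/2}, G²-1)`,
where `R_n = Q_{p^{(n)}}/Q_{p^{(n-1)}}` and bars denote reduction mod `p`. -/
theorem grothendieck_stable_odd (p ℓ n : ℕ) (hp : p.Prime) (hodd : Odd p)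
    (hℓ : 2 ≤ ℓ) (hpl : ¬ p ∣ ℓ) (hn : 2 ≤ n)
    (R : Polynomial ℤ) (hR : chebQ (plPow p ℓ (n - 1)) * R = chebQ (plPow p ℓ n)) :
    Nonempty (
      (Polynomial (ZMod p) ⧸ Ideal.span
          {R.map (Int.castRingHom (ZMod p)),
            (chebQ (plPow p ℓ (n - 1))).map (Int.castRingHom (ZMod p))}) ≃+*
      ((Polynomial (ZMod p) ⧸ Ideal.span
          {((chebQ ℓ).map (Int.castRingHom (ZMod p))) ^ (p ^ (n - 2))}) ×
        (MvPolynomial (Fin 2) (ZMod p) ⧸ Ideal.span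
          {(MvPolynomial.X 0 : MvPolynomial (Fin 2) (ZMod p)) ^ ((p ^ (n - 2) - 1) / 2),
            (MvPolynomial.X 1 : MvPolynomial (Fin 2) (ZMod p)) ^ 2 - 1}))) := by
  have : Fact p.Prime := ⟨hp⟩
  obtain ⟨k, rfl⟩ : ∃ k, n = k + 2 := ⟨n - 2, by omega⟩
  have hp3 : 3 ≤ p := by
    have := hp.two_le
    obtain ⟨t, ht⟩ := hodd
    omega
  have h2 : (2 : ZMod p) ≠ 0 := by
    intro h
    have : ((2 : ℕ) : ZMod p) = 0 := by exact_mod_cast h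
    rw [ZMod.natCast_eq_zero_iff] at this
    have := Nat.le_of_dvd (by norm_num) this
    omega
  have hl0 : (ℓ : ZMod p) ≠ 0 := by rwa [Ne, ZMod.natCast_eq_zero_iff]
  rw [show plPow p ℓ (k + 2 - 1) = ℓ * p ^ k from rfl] at hR ⊢
  rw [show plPow p ℓ (k + 2) = ℓ * p ^ (k + 1) from rfl] at hR
  rw [show k + 2 - 2 = k from rfl]
  have hR' := congrArg (Polynomial.map (Int.castRingHom (ZMod p))) hR
  rw [Polynomial.map_mul, map_chebQ_mul_pow p hodd, map_chebQ_mul_pow p hodd] at hR'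
  rw [map_chebQ_mul_pow p hodd]
  have ev2 : ((chebQ ℓ).map (Int.castRingHom (ZMod p))).eval 2 ≠ 0 := by
    have := Polynomial.eval_intCast_map (Int.castRingHom (ZMod p)) (chebQ ℓ) 2
    rw [Int.cast_id, eval_two_chebQ] at this
    push_cast at this
    rw [this]
    simpa using hl0
  have evn2 : ((chebQ ℓ).map (Int.castRingHom (ZMod p))).eval (-2) ≠ 0 := by
    have := Polynomial.eval_intCast_map (Int.castRingHom (ZMod p)) (chebQ ℓ) (-2)
    rw [Int.cast_id, eval_neg_two_chebQ] at this
    push_cast at this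
    rw [this]
    simpa using hl0
  set P := (chebQ ℓ).map (Int.castRingHom (ZMod p)) with hP
  set R' := R.map (Int.castRingHom (ZMod p))
  have hX : ∀ c : ZMod p, P.eval c ≠ 0 → IsCoprime P (Polynomial.X - Polynomial.C c) := by
    intro c hc
    refine ((Polynomial.irreducible_X_sub_C c).coprime_iff_not_dvd.2 ?_).symm
    rwa [Polynomial.dvd_iff_isRoot]
  have hD : (Polynomial.X ^ 2 - 4 : Polynomial (ZMod p)) =
      (Polynomial.X - Polynomial.C 2) * (Polynomial.X - Polynomial.C (-2)) := by
    simp only [map_neg, map_ofNat]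
    ring
  have hco : IsCoprime P (Polynomial.X ^ 2 - 4) := by
    rw [hD]
    exact (hX _ ev2).mul_right (hX _ evn2)
  have hP0 : P ≠ 0 := by
    rintro h
    simp [h] at ev2
  have hD0 : (Polynomial.X ^ 2 - 4 : Polynomial (ZMod p)) ≠ 0 := by
    rw [hD]
    exact mul_ne_zero (Polynomial.X_sub_C_ne_zero _) (Polynomial.X_sub_C_ne_zero _)
  have hdvd : P ^ p ^ k * (Polynomial.X ^ 2 - 4) ^ ((p ^ k - 1) / 2) ∣ R' := by
    apply (mul_dvd_mul_iff_left (mul_ne_zero (pow_ne_zero (p ^ k) hP0)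
      (pow_ne_zero ((p ^ k - 1) / 2) hD0))).1
    rw [hR', mul_mul_mul_comm, ← pow_add, ← pow_add]
    have h3 : 3 * p ^ k ≤ p ^ (k + 1) := by
      rw [pow_succ, mul_comm]
      exact Nat.mul_le_mul_left _ hp3
    exact mul_dvd_mul (pow_dvd_pow _ (by omega)) (pow_dvd_pow _ (by omega))
  obtain ⟨e1⟩ := nonempty_second_factor h2 ((p ^ k - 1) / 2)
  obtain ⟨e2⟩ := nonempty_crt
    (K := Ideal.span {R', P ^ p ^ k * (Polynomial.X ^ 2 - 4) ^ ((p ^ k - 1) / 2)})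
    ((Ideal.isCoprime_span_singleton_iff _ _).2
      (hco.pow (m := p ^ k) (n := (p ^ k - 1) / 2))) (by
      rw [Ideal.span_singleton_mul_span_singleton]
      exact Ideal.span_pair_eq_span_right_iff_dvd.2 hdvd)
  exact ⟨e2.trans ((RingEquiv.refl _).prodCongr e1)⟩
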